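/- arXiv:1810.13000 — 5 statements merged into one kernel-verified Lean document; each statement's English description precedes it below -/
import Mathlib

section
/- Let λ = (λ_1,…,λ_r) be a composition of n with r ≥ 2, and let t ∈ {1,…,r} satisfy s_t = 0. Then the number of orbits of T_λ equals λ_t plus the number of orbits of T_{λ'}, where λ' = (λ_1,…,λ_{t−1},λ_{t+1},…,λ_r) is the composition obtained from λ by deleting its t-th part; that is, γ(T_λ) = λ_t + γ(T_{λ'}). -/
/-!
Write `λ = a ++ c :: b`, where `c` is the deleted part. The hypothesis `s_t = 0` says that `a` and
`b` have the same sum `m`. Since `T_λ` reverses the order of the blocks, it fixes every point of the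
middle block `(m, m + c]`, and `T_{λ'}` (with `λ' = a ++ b`) exchanges the two halves `(0, m]` and
`(m, 2m]`. The injection `spread m c`, which opens a gap of length `c` after `m`, intertwines
`T_{λ'}` with `T_λ` (`Texch_spread`). Hence the orbits of `T_λ` are the images of the orbits of
`T_{λ'}` together with the `c` singletons in the middle block (`orbitsSet_insert`).
-/

/-- A composition: a nonempty list of positive integers. -/
def IsComposition (l : List ℕ) : Prop := l ≠ [] ∧ ∀ x ∈ l, 0 < x

/-- The `i`-th translation parameter (0-indexed):
`s_i = (sum of parts after position i) - (sum of parts before position i)`. -/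
def transParam (l : List ℕ) (i : ℕ) : ℤ :=
  ((l.drop (i + 1)).sum : ℤ) - ((l.take i).sum : ℤ)

/-- The symmetric discrete interval exchange associated to `l`, as a map `ℤ → ℤ`
(acting on `{1, …, n}`, identity elsewhere): `x ∈ B_i` is sent to `x + s_i`. -/
def Texch (l : List ℕ) (x : ℤ) : ℤ :=
  x + ∑ i ∈ Finset.range l.length,
    (if ((l.take i).sum : ℤ) < x ∧ x ≤ ((l.take (i + 1)).sum : ℤ) then transParam l i else 0)

/-- The orbit of `x` under `T_l`. -/
def orbit (l : List ℕ) (x : ℤ) : Set ℤ := {y | ∃ k : ℕ, (Texch l)^[k] x = y}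

/-- The set of orbits of `T_l` on `{1, …, n}`. -/
def orbitsSet (l : List ℕ) : Set (Set ℤ) :=
  {S | ∃ x : ℤ, 1 ≤ x ∧ x ≤ (l.sum : ℤ) ∧ S = orbit l x}

/-- The number of orbits `γ(T_l)` of `T_l` on `{1, …, n}`. -/
noncomputable def numOrbits (l : List ℕ) : ℕ := (orbitsSet l).ncard

/-! ### Block structure of the exchange -/

theorem Texch_cons_left (h : ℕ) (q : List ℕ) (x : ℤ) (h0 : 0 < x) (h1 : x ≤ h) :
    Texch (h :: q) x = x + q.sum := by
  unfold Texch
  rw [List.length_cons, Finset.sum_range_succ', Finset.sum_eq_zero]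
  · simp [transParam, h0, h1]
  · intro i _
    rw [if_neg]
    simp only [List.take_succ_cons, List.sum_cons]
    omega

/-- A point of `(0, l.sum]` lies in exactly one block. -/
theorem sum_block_indicator (l : List ℕ) (x : ℤ) (h0 : 0 < x) (h1 : x ≤ l.sum) :
    ∑ i ∈ Finset.range l.length,
      (if ((l.take i).sum : ℤ) < x ∧ x ≤ ((l.take (i + 1)).sum : ℤ) then (1 : ℤ) else 0) = 1 := by
  induction l generalizing x with
  | nil => simp at h1; omega
  | cons h q ih =>
    rw [List.length_cons, Finset.sum_range_succ']
    simp only [List.take_succ_cons, List.sum_cons, List.take_zero, List.sum_nil] at h1 ⊢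
    push_cast at h1 ⊢
    by_cases hx : x ≤ h
    · rw [Finset.sum_eq_zero]
      · simp [h0, hx]
      · intro i _
        rw [if_neg]
        have : (0 : ℤ) ≤ ((q.take i).sum : ℤ) := Int.natCast_nonneg _
        push_cast at this
        omega
    · have := ih (x - h) (by omega) (by push_cast; omega)
      push_cast at this
      simp only [lt_sub_iff_add_lt', sub_le_iff_le_add'] at this
      rw [this]
      simp [hx]

theorem Texch_cons_right (h : ℕ) (q : List ℕ) (x : ℤ) (h0 : h < x) (h1 : x ≤ h + q.sum) :
    Texch (h :: q) x = Texch q (x - h) := by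
  have key := sum_block_indicator q (x - h) (by omega) (by omega)
  unfold Texch
  rw [List.length_cons, Finset.sum_range_succ', if_neg (by simp; omega)]
  have : ∀ i ∈ Finset.range q.length,
      (if (((h :: q).take (i + 1)).sum : ℤ) < x ∧ x ≤ (((h :: q).take (i + 1 + 1)).sum : ℤ)
        then transParam (h :: q) (i + 1) else 0)
      = (if ((q.take i).sum : ℤ) < x - h ∧ x - h ≤ ((q.take (i + 1)).sum : ℤ)
          then transParam q i else 0)
        - h * (if ((q.take i).sum : ℤ) < x - h ∧ x - h ≤ ((q.take (i + 1)).sum : ℤ)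
          then (1 : ℤ) else 0) := by
    intro i _
    simp only [transParam, List.take_succ_cons, List.sum_cons, List.drop_succ_cons, Nat.cast_add,
      lt_sub_iff_add_lt', sub_le_iff_le_add']
    split_ifs <;> ring
  rw [Finset.sum_congr rfl this, Finset.sum_sub_distrib, ← Finset.mul_sum, key]
  ring

theorem Texch_append_left (p q : List ℕ) (x : ℤ) (h0 : 0 < x) (h1 : x ≤ p.sum) :
    Texch (p ++ q) x = Texch p x + q.sum := by
  induction p generalizing x with
  | nil => simp at h1; omega
  | cons h p ih =>
    rw [List.sum_cons, Nat.cast_add] at h1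
    rw [List.cons_append]
    by_cases hx : x ≤ h
    · rw [Texch_cons_left _ _ _ h0 hx, Texch_cons_left _ _ _ h0 hx, List.sum_append, Nat.cast_add]
      ring
    · rw [Texch_cons_right _ _ _ (by omega) (by rw [List.sum_append, Nat.cast_add]; omega),
        Texch_cons_right _ _ _ (by omega) (by omega), ih _ (by omega) (by omega)]

theorem Texch_append_right (p q : List ℕ) (x : ℤ) (h0 : p.sum < x) (h1 : x ≤ p.sum + q.sum) :
    Texch (p ++ q) x = Texch q (x - p.sum) := by
  induction p generalizing x with
  | nil => simp
  | cons h p ih =>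
    rw [List.sum_cons, Nat.cast_add] at h0 h1
    rw [List.cons_append, Texch_cons_right _ _ _ (by omega)
      (by rw [List.sum_append, Nat.cast_add]; omega), ih _ (by omega) (by omega), List.sum_cons,
      Nat.cast_add, sub_sub]

theorem Texch_mem (l : List ℕ) (x : ℤ) (h0 : 0 < x) (h1 : x ≤ l.sum) :
    0 < Texch l x ∧ Texch l x ≤ l.sum := by
  induction l generalizing x with
  | nil => simp at h1; omega
  | cons h q ih =>
    rw [List.sum_cons, Nat.cast_add] at h1 ⊢
    by_cases hx : x ≤ h
    · rw [Texch_cons_left _ _ _ h0 hx]; omega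
    · rw [Texch_cons_right _ _ _ (by omega) (by omega)]
      have := ih (x - h) (by omega) (by omega)
      omega

/-! ### Opening a gap in the middle -/

/-- The injection `ℤ → ℤ` that opens a gap of length `c` after `m`; its image misses exactly
`(m, m + c]`. -/
def spread (m c : ℕ) (y : ℤ) : ℤ := if y ≤ m then y else y + c

theorem spread_injective (m c : ℕ) : Function.Injective (spread m c) := by
  intro x y h
  unfold spread at h
  split_ifs at h <;> omega

/-- `spread` intertwines the exchanges without and with the middle block. -/
theorem Texch_spread (a b : List ℕ) (c : ℕ) (hab : a.sum = b.sum) (y : ℤ) (h0 : 0 < y)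
    (h1 : y ≤ (a ++ b).sum) :
    Texch (a ++ c :: b) (spread a.sum c y) = spread a.sum c (Texch (a ++ b) y) := by
  rw [List.sum_append, Nat.cast_add] at h1
  by_cases hy : y ≤ a.sum
  · have := Texch_mem a y h0 hy
    rw [spread, if_pos hy, Texch_append_left _ _ _ h0 hy, Texch_append_left _ _ _ h0 hy, spread,
      if_neg (by omega), List.sum_cons, Nat.cast_add]
    ring
  · have := Texch_mem b (y - a.sum) (by omega) (by omega)
    rw [spread, if_neg hy, Texch_append_right _ _ _ (by omega)
      (by rw [List.sum_cons, Nat.cast_add]; omega), Texch_cons_right _ _ _ (by omega) (by omega),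
      Texch_append_right _ _ _ (by omega) (by omega),
      show y + c - a.sum - c = y - (a.sum : ℤ) by ring, spread, if_pos (by omega)]

theorem Texch_middle (a b : List ℕ) (c : ℕ) (hab : a.sum = b.sum) (x : ℤ) (h0 : a.sum < x)
    (h1 : x ≤ a.sum + c) : Texch (a ++ c :: b) x = x := by
  rw [Texch_append_right _ _ _ h0 (by rw [List.sum_cons, Nat.cast_add]; omega),
    Texch_cons_left _ _ _ (by omega) (by omega)]
  omega

/-! ### Orbits -/

theorem orbit_spread (a b : List ℕ) (c : ℕ) (hab : a.sum = b.sum) (y : ℤ) (h0 : 0 < y)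
    (h1 : y ≤ (a ++ b).sum) :
    orbit (a ++ c :: b) (spread a.sum c y) = spread a.sum c '' orbit (a ++ b) y := by
  have key : ∀ k : ℕ, (0 < (Texch (a ++ b))^[k] y ∧ (Texch (a ++ b))^[k] y ≤ (a ++ b).sum) ∧
      (Texch (a ++ c :: b))^[k] (spread a.sum c y)
        = spread a.sum c ((Texch (a ++ b))^[k] y) := by
    intro k
    induction k with
    | zero => exact ⟨⟨h0, h1⟩, rfl⟩
    | succ k ih =>
      obtain ⟨⟨h2, h3⟩, h4⟩ := ih
      rw [Function.iterate_succ_apply', Function.iterate_succ_apply', h4]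
      exact ⟨Texch_mem _ _ h2 h3, Texch_spread a b c hab _ h2 h3⟩
  ext z
  constructor
  · rintro ⟨k, rfl⟩
    exact ⟨_, ⟨k, rfl⟩, (key k).2.symm⟩
  · rintro ⟨_, ⟨k, rfl⟩, rfl⟩
    exact ⟨k, (key k).2⟩

theorem orbit_of_fixed (l : List ℕ) (x : ℤ) (h : Texch l x = x) : orbit l x = {x} := by
  ext z
  simp only [orbit, Set.mem_ofPred_eq, Function.iterate_fixed h, Set.mem_singleton_iff]
  exact ⟨fun ⟨_, h⟩ => h.symm, fun h => ⟨0, h.symm⟩⟩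

theorem finite_orbitsSet (l : List ℕ) : (orbitsSet l).Finite := by
  refine ((Set.finite_Icc (1 : ℤ) l.sum).image (orbit l)).subset ?_
  rintro S ⟨x, h0, h1, rfl⟩
  exact ⟨x, ⟨h0, h1⟩, rfl⟩

theorem orbitsSet_insert (a b : List ℕ) (c : ℕ) (hab : a.sum = b.sum) :
    orbitsSet (a ++ c :: b) = (fun x : ℤ => ({x} : Set ℤ)) '' Set.Ioc (a.sum : ℤ) (a.sum + c) ∪
      Set.image (spread a.sum c) '' orbitsSet (a ++ b) := by
  have hsum : ((a ++ c :: b).sum : ℤ) = a.sum + c + a.sum := by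
    rw [List.sum_append, List.sum_cons, ← hab]; push_cast; ring
  have hsum' : ((a ++ b).sum : ℤ) = a.sum + a.sum := by
    rw [List.sum_append, ← hab]; push_cast; ring
  ext S
  constructor
  · rintro ⟨x, h0, h1, rfl⟩
    rw [hsum] at h1
    by_cases hm : a.sum < x ∧ x ≤ a.sum + c
    · exact Or.inl ⟨x, hm, (orbit_of_fixed _ _ (Texch_middle a b c hab x hm.1 hm.2)).symm⟩
    · obtain ⟨y, hy0, hy1, rfl⟩ : ∃ y : ℤ, 1 ≤ y ∧ y ≤ (a ++ b).sum ∧ spread a.sum c y = x := by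
        by_cases hx : x ≤ a.sum
        · exact ⟨x, h0, by omega, if_pos hx⟩
        · exact ⟨x - c, by omega, by omega, by rw [spread, if_neg (by omega)]; ring⟩
      exact Or.inr ⟨_, ⟨y, hy0, hy1, rfl⟩, (orbit_spread a b c hab y (by omega) hy1).symm⟩
  · rintro (⟨x, ⟨h0, h1⟩, rfl⟩ | ⟨_, ⟨y, h0, h1, rfl⟩, rfl⟩)
    · exact ⟨x, by omega, by omega, (orbit_of_fixed _ _ (Texch_middle a b c hab x h0 h1)).symm⟩
    · refine ⟨spread a.sum c y, ?_, ?_, (orbit_spread a b c hab y (by omega) h1).symm⟩ <;>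
      · unfold spread
        split_ifs <;> omega

theorem numOrbits_insert (a b : List ℕ) (c : ℕ) (hab : a.sum = b.sum) :
    numOrbits (a ++ c :: b) = c + numOrbits (a ++ b) := by
  unfold numOrbits
  rw [orbitsSet_insert a b c hab, Set.ncard_union_eq ?_ ((Set.finite_Ioc _ _).image _)
    ((finite_orbitsSet _).image _), Set.ncard_image_of_injective _ Set.singleton_injective,
    Set.ncard_image_of_injective _ (spread_injective _ _).image_injective]
  · simp [← Finset.coe_Ioc, Set.ncard_coe_finset]
  · rw [Set.disjoint_left]
    rintro _ ⟨x, ⟨h0, h1⟩, rfl⟩ ⟨S, -, h⟩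
    -- a point of the gap is not a value of `spread`
    obtain ⟨y, -, hy⟩ : x ∈ spread a.sum c '' S := by rw [h]; rfl
    unfold spread at hy
    split_ifs at hy <;> omega

/-- Lemma 3.2: if `s_t = 0`, then
`γ(T_λ) = λ_t + γ(T_{λ'})` where `λ'` is `λ` with its `t`-th part deleted. -/
theorem numOrbits_eq_add_of_transParam_eq_zero (l : List ℕ) (hl : IsComposition l)
    (hr : 2 ≤ l.length) (t : ℕ) (ht : t < l.length) (hs : transParam l t = 0) :
    numOrbits l = l.getD t 0 + numOrbits (l.eraseIdx t) := by
  have hab : (l.take t).sum = (l.drop (t + 1)).sum := by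
    unfold transParam at hs
    omega
  have := numOrbits_insert _ _ l[t] hab
  rw [← List.drop_eq_getElem_cons ht, List.take_append_drop] at this
  rw [this, List.eraseIdx_eq_take_drop_succ, List.getD_eq_getElem _ _ ht]
end

section
/- For every composition λ = (λ_1,…,λ_r), the value f(λ) of the recursive function f equals the number of orbits of the permutation T_λ, i.e. f(λ) = γ(T_λ). -/
private lemma eraseIdx_sum_aux (l : List ℕ) (t : ℕ) (ht : t < l.length) :
    (l.eraseIdx t).sum + l.getD t 0 = l.sum := by
  induction l generalizing t with
  | nil => simp at ht
  | cons a l ih =>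
    cases t with
    | zero => simp [List.eraseIdx, Nat.add_comm]
    | succ t =>
      simp only [List.eraseIdx, List.sum_cons, List.getD_cons_succ]
      have := ih t (by simpa using Nat.lt_of_succ_lt_succ ht)
      omega

private lemma set_sum_aux (l : List ℕ) (t : ℕ) (ht : t < l.length) (v : ℕ) :
    (l.set t v).sum + l.getD t 0 = l.sum + v := by
  induction l generalizing t with
  | nil => simp at ht
  | cons a l ih =>
    cases t with
    | zero => simp [List.set]; omega
    | succ t =>
      simp only [List.set, List.sum_cons, List.getD_cons_succ]
      have := ih t (by simpa using Nat.lt_of_succ_lt_succ ht)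
      omega

def fRec (l : List ℕ) : ℕ :=
  if hl : l.length ≤ 1 then l.sum
  else if hex : ∃ t, t < l.length ∧ |transParam l t| ≤ (l.getD t 0 : ℤ) then
    let t := Nat.find hex
    if hs0 : transParam l t = 0 then l.getD t 0 + fRec (l.eraseIdx t)
    else if heq : (l.getD t 0 : ℤ) = |transParam l t| then fRec (l.eraseIdx t)
    else fRec (l.set t (l.getD t 0 - (transParam l t).natAbs))
  else 0
termination_by l.sum + l.length
decreasing_by
  · have ht := (Nat.find_spec hex).1
    have h1 := eraseIdx_sum_aux l _ ht
    have h2 : (l.eraseIdx (Nat.find hex)).length + 1 = l.length :=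
      List.length_eraseIdx_add_one ht
    omega
  · have ht := (Nat.find_spec hex).1
    have h1 := eraseIdx_sum_aux l _ ht
    have h2 : (l.eraseIdx (Nat.find hex)).length + 1 = l.length :=
      List.length_eraseIdx_add_one ht
    omega
  · have ht := (Nat.find_spec hex).1
    have habs := (Nat.find_spec hex).2
    set t := Nat.find hex
    have hpos : 1 ≤ (transParam l t).natAbs := Int.natAbs_pos.mpr hs0
    have hle : (transParam l t).natAbs ≤ l.getD t 0 := by
      have h : ((transParam l t).natAbs : ℤ) ≤ (l.getD t 0 : ℤ) := by
        rw [← Int.abs_eq_natAbs]; exact habs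
      exact_mod_cast h
    have h1 := set_sum_aux l t ht (l.getD t 0 - (transParam l t).natAbs)
    have h2 : (l.set t (l.getD t 0 - (transParam l t).natAbs)).length = l.length :=
      List.length_set ..
    omega

/-! ### Orbits of induced maps -/

/-- The forward orbit of `x` under `f`. -/
def orb (f : ℤ → ℤ) (x : ℤ) : Set ℤ := {y | ∃ k : ℕ, f^[k] x = y}

lemma orb_step_subset (f : ℤ → ℤ) (x : ℤ) : orb f (f x) ⊆ orb f x := by
  rintro y ⟨k, hk⟩
  exact ⟨k + 1, by simpa [Function.iterate_succ_apply] using hk⟩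

lemma orb_subset_of_mem {f : ℤ → ℤ} {x y : ℤ} (h : y ∈ orb f x) : orb f y ⊆ orb f x := by
  obtain ⟨j, rfl⟩ := h
  rintro z ⟨k, rfl⟩
  exact ⟨k + j, by rw [Function.iterate_add_apply]⟩

lemma orb_mem_set {f : ℤ → ℤ} {S : Set ℤ} (hm : Set.MapsTo f S S) {x : ℤ} (hx : x ∈ S) :
    orb f x ⊆ S := by
  rintro y ⟨k, rfl⟩
  exact hm.iterate k hx

/-- Every point of a finite set is periodic under an injective self-map of that set. -/
lemma exists_period {f : ℤ → ℤ} {S : Set ℤ} (hS : S.Finite) (hm : Set.MapsTo f S S)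
    (hi : Set.InjOn f S) {x : ℤ} (hx : x ∈ S) : ∃ k, 0 < k ∧ f^[k] x = x := by
  have := hS.to_subtype
  have hinj : Function.Injective (hm.restrict f S S) := hm.restrict_inj.mpr hi
  obtain ⟨k, hk, hp⟩ := hinj.mem_periodicPts ⟨x, hx⟩
  refine ⟨k, hk, ?_⟩
  have h := congrArg Subtype.val (show (hm.restrict f S S)^[k] ⟨x, hx⟩ = ⟨x, hx⟩ from hp)
  rw [hm.iterate_restrict] at h
  simpa using h

lemma mem_orb_step {f : ℤ → ℤ} {S : Set ℤ} (hS : S.Finite) (hm : Set.MapsTo f S S)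
    (hi : Set.InjOn f S) {x : ℤ} (hx : x ∈ S) : x ∈ orb f (f x) := by
  obtain ⟨k, hk, h⟩ := exists_period hS hm hi hx
  obtain ⟨k, rfl⟩ := Nat.exists_eq_succ_of_ne_zero hk.ne'
  exact ⟨k, by simpa [Function.iterate_succ_apply] using h⟩

lemma orb_eq_of_mem {f : ℤ → ℤ} {S : Set ℤ} (hS : S.Finite) (hm : Set.MapsTo f S S)
    (hi : Set.InjOn f S) {x y : ℤ} (hx : x ∈ S) (hy : y ∈ orb f x) : orb f y = orb f x := by
  obtain ⟨k, rfl⟩ := hy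
  induction k with
  | zero => rfl
  | succ k ih =>
    rw [← ih, Function.iterate_succ_apply']
    exact Set.Subset.antisymm (orb_step_subset _ _)
      (orb_subset_of_mem (mem_orb_step hS hm hi (hm.iterate k hx)))

/-- If `g` on `S'` is, through the injection `ψ`, the map which `f` induces on a subset of `S` whose
complement contains no two consecutive points of an orbit, then `f` and `g` have equally many
orbits. -/
lemma ncard_orbs_induce {f g ψ : ℤ → ℤ} {S S' : Set ℤ} (hS : S.Finite) (hm : Set.MapsTo f S S)
    (hi : Set.InjOn f S) (hψ : Set.MapsTo ψ S' S) (hψi : Set.InjOn ψ S') (hg : Set.MapsTo g S' S')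
    (h1 : ∀ y ∈ S', f (ψ y) = ψ (g y) ∨ (f (ψ y) ∉ ψ '' S' ∧ f (f (ψ y)) = ψ (g y)))
    (h2 : ∀ x ∈ S, x ∈ ψ '' S' ∨ f x ∈ ψ '' S') :
    (orb f '' S).ncard = (orb g '' S').ncard := by
  have fwd : ∀ y ∈ S', ∀ z ∈ orb g y, ψ z ∈ orb f (ψ y) := by
    rintro y hy z ⟨k, rfl⟩
    induction k with
    | zero => exact ⟨0, rfl⟩
    | succ k ih =>
      rw [Function.iterate_succ_apply']
      obtain ⟨j, hj⟩ := ih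
      rcases h1 _ (hg.iterate k hy) with h | ⟨-, h⟩
      · exact ⟨j + 1, by rw [Function.iterate_succ_apply', hj, h]⟩
      · exact ⟨j + 2, by rw [Function.iterate_succ_apply', Function.iterate_succ_apply', hj, h]⟩
  have bwd : ∀ k : ℕ, ∀ y ∈ S', ∀ z ∈ S', f^[k] (ψ y) = ψ z → z ∈ orb g y := by
    intro k
    induction k using Nat.strong_induction_on with
    | _ k ih =>
      intro y hy z hz h
      rcases k with _ | k
      · exact ⟨0, hψi hy hz h⟩
      rw [Function.iterate_succ_apply] at h
      rcases h1 y hy with h' | ⟨hn, h'⟩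
      · rw [h'] at h
        exact orb_step_subset _ _ (ih k (by omega) _ (hg hy) z hz h)
      · rcases k with _ | k
        · exact absurd ⟨z, hz, h.symm⟩ hn
        rw [Function.iterate_succ_apply, h'] at h
        exact orb_step_subset _ _ (ih k (by omega) _ (hg hy) z hz h)
  have hrep : ∀ x ∈ S, ∃ y ∈ S', orb f x = orb f (ψ y) := by
    intro x hx
    rcases h2 x hx with ⟨y, hy, rfl⟩ | ⟨y, hy, h⟩
    · exact ⟨y, hy, rfl⟩
    · exact ⟨y, hy, by rw [h]; exact (orb_eq_of_mem hS hm hi hx ⟨1, rfl⟩).symm⟩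
  have htr : ∀ y ∈ S', {z | z ∈ S' ∧ ψ z ∈ orb f (ψ y)} = orb g y := by
    intro y hy
    ext z
    constructor
    · rintro ⟨hz, k, hk⟩
      exact bwd k y hy z hz hk
    · exact fun hz => ⟨orb_mem_set hg hy hz, fwd y hy z hz⟩
  have himg : orb g '' S' = (fun O : Set ℤ => {z | z ∈ S' ∧ ψ z ∈ O}) '' (orb f '' S) := by
    ext O
    constructor
    · rintro ⟨y, hy, rfl⟩
      exact ⟨_, ⟨ψ y, hψ hy, rfl⟩, htr y hy⟩
    · rintro ⟨_, ⟨x, hx, rfl⟩, rfl⟩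
      obtain ⟨y, hy, h⟩ := hrep x hx
      exact ⟨y, hy, by simp only [h]; exact (htr y hy).symm⟩
  rw [himg]
  refine (Set.InjOn.ncard_image ?_).symm
  rintro _ ⟨x, hx, rfl⟩ _ ⟨x', hx', rfl⟩ h
  obtain ⟨y, hy, e⟩ := hrep x hx
  obtain ⟨y', hy', e'⟩ := hrep x' hx'
  simp only [e, e', htr y hy, htr y' hy'] at h ⊢
  have : y' ∈ orb g y := by rw [h]; exact ⟨0, rfl⟩
  exact (orb_eq_of_mem hS hm hi (hψ hy) (fwd y hy y' this)).symm

lemma orb_of_fixed {f : ℤ → ℤ} {x : ℤ} (h : f x = x) : orb f x = {x} := by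
  ext y
  constructor
  · rintro ⟨k, rfl⟩
    exact Function.iterate_fixed h k
  · rintro rfl
    exact ⟨0, rfl⟩

/-- Fixed points contribute one orbit each, independently of the rest of the set. -/
lemma ncard_orbs_union_fixed {f : ℤ → ℤ} {R S : Set ℤ} (hR : R.Finite) (hS : S.Finite)
    (hd : Disjoint R S) (hf : ∀ x ∈ R, f x = x) (hm : Set.MapsTo f S S) :
    (orb f '' (R ∪ S)).ncard = R.ncard + (orb f '' S).ncard := by
  have e : orb f '' R = (fun x => ({x} : Set ℤ)) '' R :=
    Set.image_congr fun x hx => orb_of_fixed (hf x hx)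
  rw [Set.image_union, Set.ncard_union_eq _ (hR.image _) (hS.image _), e,
    Set.ncard_image_of_injective _ Set.singleton_injective]
  rw [Set.disjoint_left]
  rintro _ ⟨x, hx, rfl⟩ ⟨y, hy, h⟩
  have : x ∈ orb f y := by rw [h]; exact ⟨0, rfl⟩
  exact Set.disjoint_left.mp hd hx (orb_mem_set hm hy this)

/-! ### The exchange in terms of a decomposition of the list -/

lemma numOrbits_eq (l : List ℕ) : numOrbits l = (orb (Texch l) '' Set.Icc 1 (l.sum : ℤ)).ncard := by
  unfold numOrbits
  congr 1
  ext O
  constructor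
  · rintro ⟨x, h1, h2, rfl⟩
    exact ⟨x, ⟨h1, h2⟩, rfl⟩
  · rintro ⟨x, ⟨h1, h2⟩, rfl⟩
    exact ⟨x, h1, h2, rfl⟩

lemma transParam_append (u v : List ℕ) (c : ℕ) :
    transParam (u ++ c :: v) u.length = (v.sum : ℤ) - u.sum := by
  simp [transParam]

lemma sum_take_mono (l : List ℕ) {i j : ℕ} (h : i ≤ j) : (l.take i).sum ≤ (l.take j).sum := by
  obtain ⟨k, rfl⟩ := Nat.exists_eq_add_of_le h
  rw [List.take_add, List.sum_append]
  omega

lemma Texch_append (u v : List ℕ) (c : ℕ) (x : ℤ) (h1 : (u.sum : ℤ) < x)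
    (h2 : x ≤ (u.sum : ℤ) + c) : Texch (u ++ c :: v) x = x + v.sum - u.sum := by
  unfold Texch
  have e1 : ((u ++ c :: v).take u.length).sum = u.sum := by simp
  have e2 : ((u ++ c :: v).take (u.length + 1)).sum = u.sum + c := by
    rw [List.take_length_add_append]; simp
  rw [Finset.sum_eq_single u.length]
  · rw [e1, e2, transParam_append, if_pos ⟨h1, by omega⟩]
    ring
  · intro i _ hi
    rw [if_neg]
    rintro ⟨h3, h4⟩
    rcases Nat.lt_or_gt_of_ne hi with h | h
    · have := sum_take_mono (u ++ c :: v) (show i + 1 ≤ u.length from h)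
      omega
    · have := sum_take_mono (u ++ c :: v) (show u.length + 1 ≤ i from h)
      omega
  · intro h
    simp at h

lemma exists_block (l : List ℕ) (x : ℤ) (h1 : 1 ≤ x) (h2 : x ≤ l.sum) :
    ∃ (u : List ℕ) (c : ℕ) (v : List ℕ), l = u ++ c :: v ∧ (u.sum : ℤ) < x ∧ x ≤ (u.sum : ℤ) + c := by
  induction l generalizing x with
  | nil => simp at h2; omega
  | cons a l ih =>
    by_cases h : x ≤ a
    · exact ⟨[], a, l, rfl, by simp; omega, by simpa using h⟩
    · simp only [List.sum_cons, Nat.cast_add] at h2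
      obtain ⟨u, c, v, rfl, h3, h4⟩ := ih (x - a) (by omega) (by omega)
      exact ⟨a :: u, c, v, rfl, by rw [List.sum_cons]; omega, by rw [List.sum_cons]; omega⟩

lemma Texch_mapsTo (l : List ℕ) :
    Set.MapsTo (Texch l) (Set.Icc 1 (l.sum : ℤ)) (Set.Icc 1 (l.sum : ℤ)) := by
  rintro x ⟨h1, h2⟩
  obtain ⟨u, c, v, rfl, h3, h4⟩ := exists_block l x h1 h2
  rw [Texch_append u v c x h3 h4]
  simp only [List.sum_append, List.sum_cons, Set.mem_Icc]
  omega

/-- The exchange of the reversed list is a left inverse. -/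
lemma Texch_reverse (l : List ℕ) (x : ℤ) (h1 : 1 ≤ x) (h2 : x ≤ l.sum) :
    Texch l.reverse (Texch l x) = x := by
  obtain ⟨u, c, v, rfl, h3, h4⟩ := exists_block l x h1 h2
  have e : (u ++ c :: v).reverse = v.reverse ++ c :: u.reverse := by simp
  rw [Texch_append u v c x h3 h4, e, Texch_append]
  · simp only [List.sum_reverse]; ring
  · simp only [List.sum_reverse]; omega
  · simp only [List.sum_reverse]; omega

lemma Texch_injOn (l : List ℕ) : Set.InjOn (Texch l) (Set.Icc 1 (l.sum : ℤ)) := by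
  rintro x ⟨h1, h2⟩ y ⟨h3, h4⟩ h
  rw [← Texch_reverse l x h1 h2, h, Texch_reverse l y h3 h4]

/-! ### Inserting a block -/

lemma Texch_insert_left (p q : List ℕ) (m : ℕ) (x : ℤ) (h1 : 1 ≤ x) (h2 : x ≤ p.sum) :
    Texch (p ++ m :: q) x = Texch (p ++ q) x + m ∧ (q.sum : ℤ) < Texch (p ++ q) x ∧
      Texch (p ++ q) x ≤ (p.sum : ℤ) + q.sum := by
  obtain ⟨u, c, v, rfl, h3, h4⟩ := exists_block p x h1 h2
  have e1 := Texch_append u (v ++ m :: q) c x h3 h4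
  have e2 := Texch_append u (v ++ q) c x h3 h4
  simp only [List.sum_append, List.sum_cons, List.append_assoc, List.cons_append] at *
  rw [e1, e2]
  omega

lemma Texch_insert_mid (p q : List ℕ) (m : ℕ) (x : ℤ) (h1 : (p.sum : ℤ) < x)
    (h2 : x ≤ (p.sum : ℤ) + m) : Texch (p ++ m :: q) x = x + q.sum - p.sum :=
  Texch_append p q m x h1 h2

lemma Texch_insert_right (p q : List ℕ) (m : ℕ) (x : ℤ) (h1 : (p.sum : ℤ) + m < x)
    (h2 : x ≤ (p.sum : ℤ) + m + q.sum) :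
    Texch (p ++ m :: q) x = Texch (p ++ q) (x - m) ∧ 1 ≤ Texch (p ++ q) (x - m) ∧
      Texch (p ++ q) (x - m) ≤ q.sum := by
  obtain ⟨u, c, v, rfl, h3, h4⟩ := exists_block q (x - p.sum - m) (by omega) (by omega)
  have e1 := Texch_append (p ++ m :: u) v c x (by rw [List.sum_append, List.sum_cons]; omega)
    (by rw [List.sum_append, List.sum_cons]; omega)
  have e2 := Texch_append (p ++ u) v c (x - m) (by rw [List.sum_append]; omega)
    (by rw [List.sum_append]; omega)
  simp only [List.sum_append, List.sum_cons, List.append_assoc, List.cons_append] at *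
  rw [e1, e2]
  omega

lemma sum_insert (p q : List ℕ) (m : ℕ) :
    ((p ++ m :: q).sum : ℤ) = (p.sum : ℤ) + m + q.sum := by
  simp; ring

/-! ### The reduction steps -/

/-- A part equal to zero may be erased. -/
lemma numOrbits_insert_zero (p q : List ℕ) : numOrbits (p ++ 0 :: q) = numOrbits (p ++ q) := by
  rw [numOrbits_eq, numOrbits_eq]
  have hs : ((p ++ 0 :: q).sum : ℤ) = ((p ++ q).sum : ℤ) := by simp
  have hm := Texch_mapsTo (p ++ q)
  refine ncard_orbs_induce (ψ := id) (Set.finite_Icc _ _) (Texch_mapsTo _) (Texch_injOn _)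
    (by rw [hs]; exact Set.mapsTo_id _) Function.injective_id.injOn hm ?_ ?_
  · rintro y ⟨h1, h2⟩
    left
    simp only [List.sum_append, Nat.cast_add] at h2
    by_cases h : y ≤ p.sum
    · simpa using (Texch_insert_left p q 0 y h1 h).1
    · simpa using (Texch_insert_right p q 0 y (by omega) (by omega)).1
  · intro x hx
    left
    rw [hs] at hx
    simpa using hx

/-- A part with translation parameter zero consists of fixed points. -/
lemma numOrbits_of_balanced (p q : List ℕ) (m : ℕ) (h : q.sum = p.sum) :
    numOrbits (p ++ m :: q) = m + numOrbits (p ++ q) := by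
  rw [numOrbits_eq, numOrbits_eq]
  set ψ : ℤ → ℤ := fun y => if y ≤ p.sum then y else y + m with hψ
  have hs : ((p ++ q).sum : ℤ) = (p.sum : ℤ) + q.sum := by simp
  have key : ∀ y ∈ Set.Icc 1 ((p ++ q).sum : ℤ),
      Texch (p ++ m :: q) (ψ y) = ψ (Texch (p ++ q) y) := by
    rintro y ⟨h1, h2⟩
    simp only [hψ]
    by_cases hy : y ≤ p.sum
    · have := Texch_insert_left p q m y h1 hy
      rw [if_pos hy, if_neg (by omega), this.1]
    · have := Texch_insert_right p q m (y + m) (by omega) (by omega)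
      rw [add_sub_cancel_right] at this
      rw [if_neg hy, if_pos (by omega), this.1]
  have hunion : Set.Icc 1 ((p ++ m :: q).sum : ℤ) =
      Set.Icc ((p.sum : ℤ) + 1) (p.sum + m) ∪ ψ '' Set.Icc 1 ((p ++ q).sum : ℤ) := by
    rw [sum_insert, hs]
    ext x
    simp only [Set.mem_union, Set.mem_Icc, Set.mem_image, hψ]
    constructor
    · rintro ⟨h1, h2⟩
      by_cases hx : x ≤ p.sum
      · exact Or.inr ⟨x, ⟨h1, by omega⟩, if_pos hx⟩
      · by_cases hx' : x ≤ p.sum + m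
        · left; omega
        · exact Or.inr ⟨x - m, by omega, by rw [if_neg (by omega)]; ring⟩
    · rintro (hx | ⟨y, hy, rfl⟩)
      · omega
      · split_ifs <;> omega
  have hmaps : Set.MapsTo (Texch (p ++ m :: q)) (ψ '' Set.Icc 1 ((p ++ q).sum : ℤ))
      (ψ '' Set.Icc 1 ((p ++ q).sum : ℤ)) := by
    rintro _ ⟨y, hy, rfl⟩
    exact ⟨_, Texch_mapsTo _ hy, (key y hy).symm⟩
  have hfin : (ψ '' Set.Icc 1 ((p ++ q).sum : ℤ)).Finite := (Set.finite_Icc _ _).image _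
  have hψi : Function.Injective ψ := by
    intro x y hxy
    simp only [hψ] at hxy
    split_ifs at hxy <;> omega
  have hinj := (Texch_injOn (p ++ m :: q)).mono (hunion ▸ Set.subset_union_right)
  rw [hunion, ncard_orbs_union_fixed (Set.finite_Icc _ _) hfin _ _ hmaps]
  · congr 1
    · rw [← Finset.coe_Icc, Set.ncard_coe_finset, Int.card_Icc]
      omega
    · exact ncard_orbs_induce hfin hmaps hinj (Set.mapsTo_image _ _) hψi.injOn (Texch_mapsTo _)
        (fun y hy => Or.inl (key y hy)) (fun x hx => Or.inl hx)
  · rw [Set.disjoint_left]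
    rintro x ⟨h1, h2⟩ ⟨y, ⟨h3, h4⟩, rfl⟩
    simp only [hψ] at h1 h2
    split_ifs at h1 h2 <;> omega
  · rintro x ⟨h1, h2⟩
    rw [Texch_insert_mid p q m x (by omega) h2]
    omega

/-- Positive translation parameter `s`: induce on the complement of the `s` leftmost points of the
block. -/
lemma numOrbits_shrink_pos (p q : List ℕ) (m s : ℕ) (hs : 0 < s) (h : q.sum = p.sum + s) :
    numOrbits (p ++ (m + s) :: q) = numOrbits (p ++ m :: q) := by
  rw [numOrbits_eq, numOrbits_eq]
  have e1 := sum_insert p q (m + s)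
  have e2 := sum_insert p q m
  rw [Nat.cast_add] at e1
  have hψi : Function.Injective (fun y : ℤ => if y ≤ p.sum then y else y + s) := by
    intro x y hxy
    simp only at hxy
    split_ifs at hxy <;> omega
  refine ncard_orbs_induce (ψ := fun y => if y ≤ p.sum then y else y + s) (Set.finite_Icc _ _)
    (Texch_mapsTo _) (Texch_injOn _) ?_ hψi.injOn (Texch_mapsTo _) ?_ ?_
  · rintro y ⟨h1, h2⟩
    simp only [Set.mem_Icc]
    split_ifs <;> omega
  · rintro y ⟨h1, h2⟩
    by_cases hy : y ≤ p.sum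
    · have t := Texch_insert_left p q (m + s) y h1 hy
      have t' := Texch_insert_left p q m y h1 hy
      left
      rw [if_pos hy, t.1, t'.1, if_neg (by omega)]
      push_cast; ring
    · rw [if_neg hy]
      by_cases hy' : y ≤ p.sum + m
      · have t := Texch_insert_mid p q (m + s) (y + s) (by omega) (by omega)
        have t' := Texch_insert_mid p q m y (by omega) hy'
        left
        rw [t, t', if_neg (by omega)]
        ring
      · have t := Texch_insert_right p q (m + s) (y + s) (by omega) (by omega)
        have t' := Texch_insert_right p q m y (by omega) (by omega)
        rw [show y + (s : ℤ) - ((m + s : ℕ) : ℤ) = y - m by push_cast; ring] at t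
        rw [t.1, t'.1]
        by_cases hr : Texch (p ++ q) (y - m) ≤ p.sum
        · left
          rw [if_pos hr]
        · right
          constructor
          · rintro ⟨z, ⟨h3, h4⟩, hz⟩
            simp only at hz
            split_ifs at hz <;> omega
          · rw [if_neg hr, Texch_insert_mid p q (m + s) _ (by omega) (by omega)]
            omega
  · rintro x ⟨h1, h2⟩
    by_cases hx : x ≤ p.sum
    · exact Or.inl ⟨x, ⟨h1, by omega⟩, if_pos hx⟩
    · by_cases hx' : x ≤ p.sum + s
      · right
        rw [Texch_insert_mid p q (m + s) x (by omega) (by omega)]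
        exact ⟨x, ⟨h1, by omega⟩, by simp only; rw [if_neg hx]; omega⟩
      · exact Or.inl ⟨x - s, ⟨by omega, by omega⟩, by simp only; rw [if_neg (by omega)]; ring⟩

/-- Negative translation parameter `-s`: induce on the complement of the `s` rightmost points of the
block. -/
lemma numOrbits_shrink_neg (p q : List ℕ) (m s : ℕ) (hs : 0 < s) (h : p.sum = q.sum + s) :
    numOrbits (p ++ (m + s) :: q) = numOrbits (p ++ m :: q) := by
  rw [numOrbits_eq, numOrbits_eq]
  have e1 := sum_insert p q (m + s)
  have e2 := sum_insert p q m
  rw [Nat.cast_add] at e1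
  have hψi : Function.Injective (fun y : ℤ => if y ≤ (p.sum : ℤ) + m then y else y + s) := by
    intro x y hxy
    simp only at hxy
    split_ifs at hxy <;> omega
  refine ncard_orbs_induce (ψ := fun y => if y ≤ (p.sum : ℤ) + m then y else y + s)
    (Set.finite_Icc _ _) (Texch_mapsTo _) (Texch_injOn _) ?_ hψi.injOn (Texch_mapsTo _) ?_ ?_
  · rintro y ⟨h1, h2⟩
    simp only [Set.mem_Icc]
    split_ifs <;> omega
  · rintro y ⟨h1, h2⟩
    by_cases hy : y ≤ (p.sum : ℤ) + m
    · rw [if_pos hy]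
      by_cases hy' : y ≤ p.sum
      · have t := Texch_insert_left p q (m + s) y h1 hy'
        have t' := Texch_insert_left p q m y h1 hy'
        rw [t.1, t'.1]
        by_cases hr : Texch (p ++ q) y ≤ p.sum
        · right
          constructor
          · rintro ⟨z, ⟨h3, h4⟩, hz⟩
            simp only at hz
            split_ifs at hz <;> omega
          · rw [if_pos (by omega),
              Texch_insert_mid p q (m + s) _ (by omega) (by omega)]
            omega
        · left
          rw [if_neg (by omega)]
          push_cast; ring
      · have t := Texch_insert_mid p q (m + s) y (by omega) (by omega)
        have t' := Texch_insert_mid p q m y (by omega) hy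
        left
        rw [t, t', if_pos (by omega)]
    · have t := Texch_insert_right p q (m + s) (y + s) (by omega) (by omega)
      have t' := Texch_insert_right p q m y (by omega) (by omega)
      rw [show y + (s : ℤ) - ((m + s : ℕ) : ℤ) = y - m by push_cast; ring] at t
      left
      rw [if_neg hy, t.1, t'.1, if_pos (by omega)]
  · rintro x ⟨h1, h2⟩
    by_cases hx : x ≤ (p.sum : ℤ) + m
    · exact Or.inl ⟨x, ⟨h1, by omega⟩, if_pos hx⟩
    · by_cases hx' : x ≤ (p.sum : ℤ) + m + s
      · right
        rw [Texch_insert_mid p q (m + s) x (by omega) (by omega)]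
        exact ⟨x - s, ⟨by omega, by omega⟩, by simp only; rw [if_pos (by omega)]; omega⟩
      · exact Or.inl ⟨x - s, ⟨by omega, by omega⟩, by simp only; rw [if_neg (by omega)]; ring⟩

lemma numOrbits_shrink (p q : List ℕ) (m : ℕ) (h0 : (q.sum : ℤ) - p.sum ≠ 0)
    (hle : |(q.sum : ℤ) - p.sum| ≤ m) :
    numOrbits (p ++ m :: q) = numOrbits (p ++ (m - ((q.sum : ℤ) - p.sum).natAbs) :: q) := by
  rw [Int.abs_eq_natAbs] at hle
  obtain ⟨k, hk⟩ : ∃ k, m = k + ((q.sum : ℤ) - p.sum).natAbs :=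
    ⟨m - ((q.sum : ℤ) - p.sum).natAbs, by omega⟩
  have e : m - ((q.sum : ℤ) - p.sum).natAbs = k := by omega
  rw [e, hk]
  rcases lt_or_gt_of_ne h0 with h | h
  · exact numOrbits_shrink_neg p q k _ (by omega) (by omega)
  · exact numOrbits_shrink_pos p q k _ (by omega) (by omega)

/-! ### The recursion -/

/-- The recursion never gets stuck: the block containing the midpoint `⌈n/2⌉` qualifies. -/
lemma exists_small_param (l : List ℕ) (hl : l ≠ []) :
    ∃ t, t < l.length ∧ |transParam l t| ≤ (l.getD t 0 : ℤ) := by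
  by_cases h0 : l.sum = 0
  · obtain ⟨a, l, rfl⟩ := List.exists_cons_of_ne_nil hl
    refine ⟨0, by simp, ?_⟩
    have : l.sum = 0 := by
      rw [List.sum_cons] at h0
      omega
    simp [transParam, this]
  · obtain ⟨u, c, v, rfl, h1, h2⟩ := exists_block l ((l.sum + 1) / 2 : ℕ) (by omega) (by omega)
    refine ⟨u.length, by simp, ?_⟩
    rw [transParam_append]
    have : (u ++ c :: v).getD u.length 0 = c := by simp
    rw [this]
    simp only [List.sum_append, List.sum_cons] at h1 h2
    rw [abs_le]
    omega

lemma split_at (l : List ℕ) (t : ℕ) (ht : t < l.length) :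
    ∃ p q, l = p ++ l.getD t 0 :: q ∧ t = p.length ∧ l.eraseIdx t = p ++ q ∧
      ∀ a, l.set t a = p ++ a :: q := by
  refine ⟨l.take t, l.drop (t + 1), ?_, ?_, List.eraseIdx_eq_take_drop_succ .., ?_⟩
  · rw [List.getD_eq_getElem _ _ ht, List.getElem_cons_drop, List.take_append_drop]
  · simp; omega
  · intro a
    rw [List.set_eq_take_append_cons_drop, if_pos ht]

lemma numOrbits_nil : numOrbits [] = 0 := by
  rw [numOrbits_eq]
  simp

lemma fRec_eq_numOrbits_all (l : List ℕ) : fRec l = numOrbits l := by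
  induction hn : l.sum + l.length using Nat.strong_induction_on generalizing l with
  | _ n ih =>
    subst hn
    rw [fRec]
    split_ifs with hl hex
    · match l, hl with
      | [], _ => rw [numOrbits_nil]; rfl
      | [m], _ =>
        have := numOrbits_of_balanced [] [] m rfl
        simpa [numOrbits_nil] using this.symm
    · obtain ⟨ht, hle⟩ := Nat.find_spec hex
      revert ht hle
      generalize Nat.find hex = t
      intro ht hle
      obtain ⟨p, q, he, hlen, her, hset⟩ := split_at l t ht
      obtain ⟨m, hm⟩ : ∃ m, l.getD t 0 = m := ⟨_, rfl⟩
      rw [hm] at he hle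
      have htp : transParam l t = (q.sum : ℤ) - p.sum := by
        rw [he, hlen, transParam_append]
      have hsum : l.sum + l.length = p.sum + m + q.sum + p.length + q.length + 1 := by
        rw [he]; simp; ring
      simp only [htp, her, hset, hm] at hle ⊢
      have ihe : fRec (p ++ q) = numOrbits (p ++ q) :=
        ih _ (by rw [hsum]; simp; omega) _ rfl
      rw [show numOrbits l = numOrbits (p ++ m :: q) by rw [← he]]
      split_ifs with h0 h1
      · rw [ihe, numOrbits_of_balanced p q m (by omega)]
      · rw [ihe, numOrbits_shrink p q m h0 hle, ← numOrbits_insert_zero]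
        rw [Int.abs_eq_natAbs] at h1
        congr 3
        omega
      · rw [numOrbits_shrink p q m h0 hle]
        refine ih _ ?_ _ rfl
        rw [Int.abs_eq_natAbs] at hle
        rw [hsum]
        simp only [List.sum_append, List.sum_cons, List.length_append, List.length_cons]
        omega
    · exact absurd (exists_small_param l (by rintro rfl; simp at hl)) hex

/-- Theorem 3.5: the recursive function `f` counts the orbits of `T_λ`. -/
theorem fRec_eq_numOrbits (l : List ℕ) (hl : IsComposition l) :
    fRec l = numOrbits l :=
  fRec_eq_numOrbits_all l
end

section
/- Let λ = (λ_1,…,λ_r) be a circular composition and let t ∈ {1,…,r} satisfy λ_t > |s_t|. Then λ_i < |s_i| for every index i ∈ {1,…,r} with i ≠ t, where s_i denotes the i-th translation parameter of λ. -/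
/-- A composition is circular if its symmetric discrete interval exchange is minimal,
i.e. has exactly one orbit. -/
def IsCircular (l : List ℕ) : Prop := numOrbits l = 1

theorem getD_eq_sub_take_sum (l : List ℕ) (i : ℕ) (hi : i < l.length) :
    (l.getD i 0 : ℤ) = ((l.take (i + 1)).sum : ℤ) - ((l.take i).sum : ℤ) := by
  have h := List.sum_take_succ l i hi
  rw [List.getD_eq_getElem _ _ hi]
  omega

theorem transParam_eq_sub_take_sum (l : List ℕ) (i : ℕ) :
    transParam l i =
      (l.sum : ℤ) - ((l.take (i + 1)).sum : ℤ) - ((l.take i).sum : ℤ) := by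
  have h := List.sum_take_add_sum_drop l (i + 1)
  unfold transParam
  omega

theorem take_sum_mono (l : List ℕ) {i j : ℕ} (hij : i ≤ j) :
    (l.take i).sum ≤ (l.take j).sum :=
  (List.take_sublist_take_left hij).sum_le_sum (fun _ _ => Nat.zero_le _)

/-- Lemma 4.1: in a circular composition, if `λ_t > |s_t|`
then `λ_i < |s_i|` for every other index `i`. -/
theorem part_lt_abs_transParam_of_circular (l : List ℕ) (hl : IsComposition l)
    (hc : IsCircular l) (t : ℕ) (ht : t < l.length)
    (hgt : |transParam l t| < (l.getD t 0 : ℤ)) :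
    ∀ i < l.length, i ≠ t → (l.getD i 0 : ℤ) < |transParam l i| := by
  intro i hi hne
  by_contra! hle
  rw [getD_eq_sub_take_sum l t ht, transParam_eq_sub_take_sum, abs_lt] at hgt
  rw [getD_eq_sub_take_sum l i hi, transParam_eq_sub_take_sum, abs_le] at hle
  rcases Nat.lt_or_gt_of_ne hne with h | h
  · have := take_sum_mono l (Nat.succ_le_of_lt h)
    simp only [Nat.succ_eq_add_one] at this
    omega
  · have := take_sum_mono l (Nat.succ_le_of_lt h)
    simp only [Nat.succ_eq_add_one] at this
    omega
end

section
/- Let (λ_1, λ_2, λ_3) be a composition of n = λ_1 + λ_2 + λ_3 and set d = gcd(λ_1 + λ_2, λ_2 + λ_3). Then for every x ∈ {1,…,n}, the orbit of x under the permutation T_{(λ_1,λ_2,λ_3)} is exactly the set {x + kd : k ∈ ℤ, 1 ≤ x + kd ≤ n}, i.e. the set of all elements of {1,…,n} congruent to x modulo d. -/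
lemma Texch_triple (a b c : ℕ) (x : ℤ) :
    Texch [a, b, c] x = x + (if 0 < x ∧ x ≤ a then (b + c : ℤ) else 0)
      + (if a < x ∧ x ≤ a + b then (c - a : ℤ) else 0)
      + (if a + b < x ∧ x ≤ a + b + c then (-(a + b) : ℤ) else 0) := by
  simp [Texch, transParam, Finset.sum_range_succ, ← add_assoc]

lemma Texch_iterate_mem (a b c : ℕ) (x : ℤ) (hx1 : 1 ≤ x) (hxn : x ≤ (a + b + c : ℤ)) (k : ℕ) :
    1 ≤ (Texch [a, b, c])^[k] x ∧ (Texch [a, b, c])^[k] x ≤ (a + b + c : ℤ) ∧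
      ((Nat.gcd (a + b) (b + c) : ℕ) : ℤ) ∣ (Texch [a, b, c])^[k] x - x := by
  induction k with
  | zero => simpa using ⟨hx1, hxn⟩
  | succ k ih =>
    rw [Function.iterate_succ_apply']
    obtain ⟨h1, h2, h3⟩ := ih
    generalize (Texch [a, b, c])^[k] x = z at h1 h2 h3
    have hp : ((Nat.gcd (a + b) (b + c) : ℕ) : ℤ) ∣ (a + b : ℤ) := by
      exact_mod_cast Nat.gcd_dvd_left (a + b) (b + c)
    have hq : ((Nat.gcd (a + b) (b + c) : ℕ) : ℤ) ∣ (b + c : ℤ) := by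
      exact_mod_cast Nat.gcd_dvd_right (a + b) (b + c)
    have hT := Texch_triple a b c z
    have key : Texch [a, b, c] z = z + (b + c) ∧ z ≤ a ∨
        Texch [a, b, c] z = z + ((b + c) - (a + b)) ∧ a < z ∧ z ≤ a + b ∨
        Texch [a, b, c] z = z - (a + b) ∧ a + b < z := by
      split_ifs at hT <;> omega
    rcases key with ⟨h, hz⟩ | ⟨h, hz, hz'⟩ | ⟨h, hz⟩ <;> rw [h]
    · refine ⟨by omega, by omega, ?_⟩
      convert Int.dvd_add h3 hq using 1
      ring
    · refine ⟨by omega, by omega, ?_⟩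
      convert Int.dvd_add h3 (Int.dvd_sub hq hp) using 1
      ring
    · refine ⟨by omega, by omega, ?_⟩
      convert Int.dvd_sub h3 hp using 1
      ring

/-- If `y` is reached from `x` by `k` steps of the rotation by `b + c` modulo `a + 2b + c`, it is
reached by iterating `T`. -/
lemma exists_iterate_eq (a b c : ℕ) (y : ℤ) (hy1 : 1 ≤ y) (hyn : y ≤ (a + b + c : ℤ)) (k : ℕ) :
    ∀ x : ℤ, 1 ≤ x → x ≤ (a + b + c : ℤ) →
      (a + 2 * b + c : ℤ) ∣ x + k * (b + c) - y → ∃ j : ℕ, (Texch [a, b, c])^[j] x = y := by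
  induction k using Nat.strong_induction_on with
  | _ k ih =>
    intro x hx1 hxn hdvd
    rcases k with _ | k
    · refine ⟨0, ?_⟩
      have h0 := Int.eq_zero_of_abs_lt_dvd hdvd (by rw [abs_lt]; push_cast; constructor <;> omega)
      simp only [Function.iterate_zero, id]
      push_cast at h0
      omega
    · have hT := Texch_triple a b c x
      have key : Texch [a, b, c] x = x + (b + c) ∧ x ≤ a ∨
          Texch [a, b, c] x = x + ((b + c) - (a + b)) ∧ a < x ∧ x ≤ a + b ∨
          Texch [a, b, c] x = x - (a + b) ∧ a + b < x := by
        split_ifs at hT <;> omega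
      -- It suffices to follow one step of `T` by fewer than `k + 1` steps of the rotation.
      have step : ∀ m < k + 1, 1 ≤ Texch [a, b, c] x → Texch [a, b, c] x ≤ (a + b + c : ℤ) →
          (a + 2 * b + c : ℤ) ∣ Texch [a, b, c] x + m * (b + c) - y →
          ∃ j : ℕ, (Texch [a, b, c])^[j] x = y := by
        intro m hm h1 h2 h3
        obtain ⟨j, hj⟩ := ih m hm _ h1 h2 h3
        exact ⟨j + 1, by rw [Function.iterate_succ_apply, hj]⟩
      rcases key with ⟨h, hz⟩ | ⟨h, hz, hz'⟩ | ⟨h, hz⟩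
      · refine step k (by omega) (by omega) (by omega) ?_
        rw [h]
        convert hdvd using 1
        push_cast
        ring
      · rcases k with _ | k
        · -- A single rotation step leaves `{1,…,a+b+c}`, so it cannot end at `y`.
          have h0 := Int.eq_zero_of_abs_lt_dvd hdvd
            (by rw [abs_lt]; push_cast; constructor <;> omega)
          push_cast at h0
          omega
        · refine step k (by omega) (by omega) (by omega) ?_
          rw [h]
          convert Int.dvd_sub hdvd (dvd_refl (a + 2 * b + c : ℤ)) using 1
          push_cast
          ring
      · refine step k (by omega) (by omega) (by omega) ?_
        rw [h]
        convert Int.dvd_sub hdvd (dvd_refl (a + 2 * b + c : ℤ)) using 1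
        push_cast
        ring

lemma exists_rotation_steps (a b c : ℕ) (hb : 0 < b) (x y : ℤ)
    (h : ((Nat.gcd (a + b) (b + c) : ℕ) : ℤ) ∣ y - x) :
    ∃ k : ℕ, (a + 2 * b + c : ℤ) ∣ x + k * (b + c) - y := by
  obtain ⟨m, hm⟩ := h
  have hbez := Nat.gcd_eq_gcd_ab (a + b) (b + c)
  set u := Nat.gcdA (a + b) (b + c)
  set v := Nat.gcdB (a + b) (b + c)
  rw [hbez] at hm
  push_cast at hm
  -- Since `a + b ≡ -(b + c)` modulo `a + 2b + c`, Bézout gives `y - x ≡ m (v - u) (b + c)`.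
  have hN : (0 : ℤ) < a + 2 * b + c := by omega
  have hmod := Int.emod_add_mul_ediv (m * (v - u)) (a + 2 * b + c)
  refine ⟨((m * (v - u)) % (a + 2 * b + c : ℤ)).toNat, ?_⟩
  rw [Int.toNat_of_nonneg (Int.emod_nonneg _ hN.ne')]
  refine ⟨-((m * (v - u)) / (a + 2 * b + c : ℤ)) * (b + c) - u * m, ?_⟩
  linear_combination (b + c : ℤ) * hmod - hm

/-- Theorem 5.3: for a composition `(λ₁,λ₂,λ₃)` of `n` and
`d = gcd(λ₁+λ₂, λ₂+λ₃)`, the orbit of any `x ∈ {1,…,n}` under `T_{(λ₁,λ₂,λ₃)}` is the set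
of elements of `{1,…,n}` congruent to `x` modulo `d`. -/
theorem orbit_triple (a b c : ℕ) (ha : 0 < a) (hb : 0 < b) (hc : 0 < c)
    (x : ℤ) (hx1 : 1 ≤ x) (hxn : x ≤ ((a + b + c : ℕ) : ℤ)) :
    orbit [a, b, c] x =
      {y : ℤ | 1 ≤ y ∧ y ≤ ((a + b + c : ℕ) : ℤ) ∧
        ((Nat.gcd (a + b) (b + c) : ℤ)) ∣ (y - x)} := by
  push_cast at hxn
  ext y
  simp only [orbit, Set.mem_ofPred_eq]
  push_cast
  constructor
  · rintro ⟨k, rfl⟩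
    exact Texch_iterate_mem a b c x hx1 hxn k
  · rintro ⟨hy1, hyn, hd⟩
    obtain ⟨k, hk⟩ := exists_rotation_steps a b c hb x y hd
    exact exists_iterate_eq a b c y hy1 hyn k x hx1 hxn hk
end

section
/- Let (λ_1, λ_2, λ_3) be a composition of n = λ_1 + λ_2 + λ_3, set d = gcd(λ_1 + λ_2, λ_2 + λ_3), and write n = qd + r with 0 ≤ r < d. Then T_{(λ_1,λ_2,λ_3)} has exactly d orbits; moreover, exactly r of the orbits have cardinality q + 1 and the remaining d − r orbits have cardinality q. In particular, T_{(λ_1,λ_2,λ_3)} is minimal if and only if gcd(λ_1 + λ_2, λ_2 + λ_3) = 1. -/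
lemma Texch_left (a b c : ℕ) (x : ℤ) (h1 : 1 ≤ x) (h2 : x ≤ a) :
    Texch [a, b, c] x = x + (b + c) := by
  simp only [Texch, transParam, List.length_cons, List.length_nil, Finset.sum_range_succ,
    Finset.sum_range_zero, List.take, List.drop, List.sum_cons, List.sum_nil]
  push_cast
  split_ifs <;> omega

lemma Texch_mid (a b c : ℕ) (x : ℤ) (h1 : (a : ℤ) < x) (h2 : x ≤ a + b) :
    Texch [a, b, c] x = x + (c - a) := by
  simp only [Texch, transParam, List.length_cons, List.length_nil, Finset.sum_range_succ,
    Finset.sum_range_zero, List.take, List.drop, List.sum_cons, List.sum_nil]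
  push_cast
  split_ifs <;> omega

lemma Texch_right (a b c : ℕ) (x : ℤ) (h1 : (a + b : ℤ) < x) (h2 : x ≤ a + b + c) :
    Texch [a, b, c] x = x - (a + b) := by
  simp only [Texch, transParam, List.length_cons, List.length_nil, Finset.sum_range_succ,
    Finset.sum_range_zero, List.take, List.drop, List.sum_cons, List.sum_nil]
  push_cast
  split_ifs <;> omega

/-- `T` preserves `{1, …, n}` and residues modulo any common divisor of `a + b` and `b + c`. -/
lemma iterate_Texch_invariant (a b c : ℕ) (d x : ℤ) (hp : d ∣ (a + b : ℤ))
    (hm : d ∣ (b + c : ℤ)) (h1 : 1 ≤ x) (h2 : x ≤ a + b + c) (j : ℕ) :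
    1 ≤ (Texch [a, b, c])^[j] x ∧ (Texch [a, b, c])^[j] x ≤ a + b + c ∧
      d ∣ (Texch [a, b, c])^[j] x - x := by
  induction j with
  | zero => simp [h1, h2]
  | succ j ih =>
    rw [Function.iterate_succ_apply']
    obtain ⟨i1, i2, i3⟩ := ih
    generalize (Texch [a, b, c])^[j] x = z at *
    rcases le_or_gt z a with h | h
    · rw [Texch_left a b c z i1 h]
      refine ⟨by omega, by omega, ?_⟩
      have := dvd_add i3 hm
      exact this.trans (dvd_of_eq (by ring))
    · rcases le_or_gt z (a + b) with h' | h'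
      · rw [Texch_mid a b c z h h']
        refine ⟨by omega, by omega, ?_⟩
        have := dvd_sub (dvd_add i3 hm) hp
        exact this.trans (dvd_of_eq (by ring))
      · rw [Texch_right a b c z h' i2]
        refine ⟨by omega, by omega, ?_⟩
        have := dvd_sub i3 hp
        exact this.trans (dvd_of_eq (by ring))

/-- The `T`-orbit of `x` follows the orbit of the rotation by `m = b + c` modulo
`N = a + 2b + c`: the `k`-th point of the latter is either a point `z` of the `T`-orbit, or the
intermediate point `z + m` on the way from a middle-block point `z` to `T z`. -/
lemma exists_iterate_rotation (a b c : ℕ) (x : ℤ) (h1 : 1 ≤ x) (h2 : x ≤ a + b + c) (k : ℕ) :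
    ∃ j : ℕ, ((a + b + (b + c) : ℤ) ∣ (Texch [a, b, c])^[j] x - (x + k * (b + c))) ∨
      ((a : ℤ) < (Texch [a, b, c])^[j] x ∧ (Texch [a, b, c])^[j] x ≤ a + b ∧
        (a + b + (b + c) : ℤ) ∣ (Texch [a, b, c])^[j] x + (b + c) - (x + k * (b + c))) := by
  induction k with
  | zero => exact ⟨0, Or.inl (by simp)⟩
  | succ k ih =>
    obtain ⟨j, h⟩ := ih
    obtain ⟨i1, i2, -⟩ := iterate_Texch_invariant a b c 1 x (one_dvd _) (one_dvd _) h1 h2 j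
    rcases h with h | ⟨l1, l2, h⟩
    · rcases le_or_gt ((Texch [a, b, c])^[j] x) a with h3 | h3
      · refine ⟨j + 1, Or.inl ?_⟩
        rw [Function.iterate_succ_apply', Texch_left a b c _ i1 h3]
        exact h.trans (dvd_of_eq (by push_cast; ring))
      · rcases le_or_gt ((Texch [a, b, c])^[j] x) (a + b) with h4 | h4
        · refine ⟨j, Or.inr ⟨h3, h4, ?_⟩⟩
          exact h.trans (dvd_of_eq (by push_cast; ring))
        · refine ⟨j + 1, Or.inl ?_⟩
          rw [Function.iterate_succ_apply', Texch_right a b c _ h4 i2]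
          have := dvd_sub h (dvd_refl (a + b + (b + c) : ℤ))
          exact this.trans (dvd_of_eq (by push_cast; ring))
    · refine ⟨j + 1, Or.inl ?_⟩
      rw [Function.iterate_succ_apply', Texch_mid a b c _ l1 l2]
      have := dvd_sub h (dvd_refl (a + b + (b + c) : ℤ))
      exact this.trans (dvd_of_eq (by push_cast; ring))

/-- Every multiple `e` of `gcd(p, m)` is congruent modulo `p + m` to a nonnegative multiple
of `m`. -/
lemma exists_nat_mul_modEq (p m : ℕ) (hp : 0 < p) (e : ℤ) (he : ((Nat.gcd p m : ℕ) : ℤ) ∣ e) :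
    ∃ k : ℕ, (p + m : ℤ) ∣ e - k * m := by
  obtain ⟨t, rfl⟩ := he
  have hN : (0 : ℤ) < p + m := by omega
  set u : ℤ := t * (Nat.gcdB p m - Nat.gcdA p m) with hu
  -- Bézout: `gcd(p, m) = p A + m B ≡ m (B - A)` modulo `p + m`.
  have hb := Nat.gcd_eq_gcd_ab p m
  refine ⟨(u % (p + m)).toNat, ?_⟩
  rw [Int.toNat_of_nonneg (Int.emod_nonneg _ hN.ne'), Int.emod_def, hb]
  refine ⟨t * Nat.gcdA p m + (u / (p + m)) * m, ?_⟩
  generalize u / (p + m : ℤ) = v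
  rw [hu]; ring

lemma mem_orbit_triple_iff (a b c : ℕ) (ha : 0 < a) (x y : ℤ) (h1 : 1 ≤ x)
    (h2 : x ≤ a + b + c) :
    y ∈ orbit [a, b, c] x ↔
      1 ≤ y ∧ y ≤ a + b + c ∧ ((Nat.gcd (a + b) (b + c) : ℕ) : ℤ) ∣ y - x := by
  have hp : ((Nat.gcd (a + b) (b + c) : ℕ) : ℤ) ∣ (a + b : ℤ) := by
    exact_mod_cast Nat.gcd_dvd_left (a + b) (b + c)
  have hm : ((Nat.gcd (a + b) (b + c) : ℕ) : ℤ) ∣ (b + c : ℤ) := by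
    exact_mod_cast Nat.gcd_dvd_right (a + b) (b + c)
  constructor
  · rintro ⟨j, rfl⟩
    exact iterate_Texch_invariant a b c _ x hp hm h1 h2 j
  · rintro ⟨y1, y2, y3⟩
    obtain ⟨k, hk⟩ := exists_nat_mul_modEq (a + b) (b + c) (by omega) _ y3
    push_cast at hk
    obtain ⟨j, h⟩ := exists_iterate_rotation a b c x h1 h2 k
    obtain ⟨i1, i2, -⟩ := iterate_Texch_invariant a b c _ x hp hm h1 h2 j
    refine ⟨j, ?_⟩
    generalize (Texch [a, b, c])^[j] x = z at *
    rcases h with h | ⟨l1, l2, h⟩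
    · have h5 : (a + b + (b + c) : ℤ) ∣ z - y := by
        exact (dvd_sub h hk).trans (dvd_of_eq (by ring))
      have := Int.eq_zero_of_abs_lt_dvd h5 (by rw [abs_lt]; constructor <;> omega)
      omega
    · -- Here `z + m` lies in `(n, N]`, so it cannot be congruent to `y ∈ [1, n]` modulo `N`.
      have h5 : (a + b + (b + c) : ℤ) ∣ z + (b + c) - y := by
        exact (dvd_sub h hk).trans (dvd_of_eq (by ring))
      have := Int.eq_zero_of_abs_lt_dvd h5 (by rw [abs_lt]; constructor <;> omega)
      omega

/-- The residue class of `i + 1` modulo `d`, cut down to `{1, …, n}`. -/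
def resClass (n d i : ℕ) : Set ℤ := {y | 1 ≤ y ∧ y ≤ n ∧ (d : ℤ) ∣ y - (i + 1)}

lemma ncard_resClass (n d i : ℕ) (hi : i < d) :
    (resClass n d i).ncard = n / d + if i < n % d then 1 else 0 := by
  have himg : resClass n d i = (fun t : ℕ => (i + 1 + d * t : ℤ)) ''
      (Finset.range (n / d + if i < n % d then 1 else 0) : Set ℕ) := by
    have hdiv := Nat.div_add_mod n d
    have hlt := Nat.mod_lt n (by omega : d > 0)
    generalize n / d = q at *
    generalize n % d = r at *
    ext y
    simp only [resClass, Set.mem_ofPred_eq, Set.mem_image, Finset.coe_range, Set.mem_Iio]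
    constructor
    · rintro ⟨y1, y2, s, hs⟩
      have hs0 : 0 ≤ s := by
        by_contra hneg
        have : (d : ℤ) * s ≤ d * (-1) := by gcongr; omega
        omega
      lift s to ℕ using hs0
      refine ⟨s, ?_, by linarith⟩
      have hle : i + 1 + d * s ≤ d * q + r := by zify; rw [← hdiv] at y2; push_cast at y2; linarith
      by_contra hge
      split_ifs at hge with hir
      · have : d * (q + 1) ≤ d * s := by gcongr; omega
        rw [mul_add] at this; omega
      · have : d * q ≤ d * s := by gcongr; omega
        omega
    · rintro ⟨t, ht, rfl⟩
      have h0 : (0 : ℤ) ≤ d * t := by positivity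
      refine ⟨by omega, ?_, t, by ring⟩
      have : i + 1 + d * t ≤ n := by
        rw [← hdiv]
        split_ifs at ht with hir
        · have : d * t ≤ d * q := by gcongr; omega
          omega
        · have : d * (t + 1) ≤ d * q := by gcongr; omega
          rw [mul_add] at this; omega
      exact_mod_cast this
  rw [himg, Set.ncard_image_of_injective, Set.ncard_coe_finset, Finset.card_range]
  intro s t hst
  have hd : (d : ℤ) ≠ 0 := by omega
  have : (d : ℤ) * s = d * t := by simpa using hst
  exact_mod_cast mul_left_cancel₀ hd this

lemma resClass_injOn (n d : ℕ) (hdn : d ≤ n) : Set.InjOn (resClass n d) (Set.Iio d) := by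
  intro i hi j hj hij
  simp only [Set.mem_Iio] at hi hj
  have hmem : ((i : ℤ) + 1) ∈ resClass n d i := ⟨by omega, by omega, by simp⟩
  rw [hij] at hmem
  have := Int.eq_zero_of_abs_lt_dvd hmem.2.2 (by rw [abs_lt]; constructor <;> omega)
  omega

lemma orbitsSet_triple (a b c : ℕ) (ha : 0 < a) (hc : 0 < c) :
    orbitsSet [a, b, c] =
      resClass (a + b + c) (Nat.gcd (a + b) (b + c)) '' Set.Iio (Nat.gcd (a + b) (b + c)) := by
  have hle : Nat.gcd (a + b) (b + c) ≤ a + b := Nat.gcd_le_left _ (by omega)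
  have hpos : 0 < Nat.gcd (a + b) (b + c) := Nat.gcd_pos_of_pos_left _ (by omega)
  have key := fun x y => mem_orbit_triple_iff a b c ha x y
  generalize Nat.gcd (a + b) (b + c) = d at *
  ext S
  simp only [orbitsSet, Set.mem_ofPred_eq, Set.mem_image, Set.mem_Iio, List.sum_cons, List.sum_nil]
  constructor
  · rintro ⟨x, h1, h2, rfl⟩
    push_cast at h2
    have hd : (0 : ℤ) < d := by omega
    have e0 := Int.emod_nonneg (x - 1) hd.ne'
    have e1 := Int.emod_lt_of_pos (x - 1) hd
    refine ⟨((x - 1) % d).toNat, by omega, ?_⟩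
    ext y
    rw [key x y h1 (by omega)]
    simp only [resClass, Set.mem_ofPred_eq, Int.toNat_of_nonneg e0]
    push_cast
    have hx : (d : ℤ) ∣ x - ((x - 1) % d + 1) := by
      have := Int.dvd_self_sub_emod (x := x - 1) (m := (d : ℤ))
      exact this.trans (dvd_of_eq (by ring))
    have hsplit : y - ((x - 1) % d + 1) = (y - x) + (x - ((x - 1) % d + 1)) := by ring
    rw [hsplit, dvd_add_left hx]
  · rintro ⟨i, hi, rfl⟩
    refine ⟨i + 1, by omega, by push_cast; omega, ?_⟩
    ext y
    rw [key (i + 1) y (by omega) (by omega)]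
    simp only [resClass, Set.mem_ofPred_eq]
    push_cast
    rfl

/-- Corollary 5.4: with `d = gcd(λ₁+λ₂, λ₂+λ₃)` and `n = qd + r`
(`0 ≤ r < d`), `T_{(λ₁,λ₂,λ₃)}` has exactly `d` orbits, of which exactly `r` have
cardinality `q+1` and the remaining `d - r` have cardinality `q`; in particular it is
minimal iff `d = 1`. -/
theorem cyclicType_triple (a b c : ℕ) (ha : 0 < a) (hb : 0 < b) (hc : 0 < c)
    (n d q r : ℕ) (hn : n = a + b + c) (hd : d = Nat.gcd (a + b) (b + c))
    (hq : q = n / d) (hr : r = n % d) :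
    numOrbits [a, b, c] = d ∧
      {S ∈ orbitsSet [a, b, c] | S.ncard = q + 1}.ncard = r ∧
      {S ∈ orbitsSet [a, b, c] | S.ncard = q}.ncard = d - r ∧
      (numOrbits [a, b, c] = 1 ↔ d = 1) := by
  have hle : d ≤ a + b := hd ▸ Nat.gcd_le_left _ (by omega)
  have hpos : 0 < d := hd ▸ Nat.gcd_pos_of_pos_left _ (by omega)
  have hO : orbitsSet [a, b, c] = resClass n d '' Set.Iio d := by
    rw [orbitsSet_triple a b c ha hc, ← hd, ← hn]
  have hinj := resClass_injOn n d (by omega)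
  have hrd : r < d := hr ▸ Nat.mod_lt n hpos
  have hcard : ∀ i < d, (resClass n d i).ncard = q + if i < r then 1 else 0 := by
    intro i hi
    rw [ncard_resClass n d i hi, ← hq, ← hr]
  have hnum : numOrbits [a, b, c] = d := by
    rw [numOrbits, hO, hinj.ncard_image, ← Finset.coe_Iio, Set.ncard_coe_finset, Nat.card_Iio]
  refine ⟨hnum, ?_, ?_, by rw [hnum]⟩
  · have hS : {S ∈ orbitsSet [a, b, c] | S.ncard = q + 1} = resClass n d '' Set.Iio r := by
      rw [hO]
      ext S
      simp only [Set.mem_ofPred_eq, Set.mem_image, Set.mem_Iio]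
      constructor
      · rintro ⟨⟨i, hi, rfl⟩, h⟩
        rw [hcard i hi] at h
        refine ⟨i, ?_, rfl⟩
        by_contra hir
        simp [hir] at h
      · rintro ⟨i, hi, rfl⟩
        exact ⟨⟨i, by omega, rfl⟩, by rw [hcard i (by omega), if_pos hi]⟩
    rw [hS, (hinj.mono (Set.Iio_subset_Iio hrd.le)).ncard_image, ← Finset.coe_Iio,
      Set.ncard_coe_finset, Nat.card_Iio]
  · have hS : {S ∈ orbitsSet [a, b, c] | S.ncard = q} = resClass n d '' Set.Ico r d := by
      rw [hO]
      ext S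
      simp only [Set.mem_ofPred_eq, Set.mem_image, Set.mem_Iio, Set.mem_Ico]
      constructor
      · rintro ⟨⟨i, hi, rfl⟩, h⟩
        rw [hcard i hi] at h
        refine ⟨i, ⟨?_, hi⟩, rfl⟩
        by_contra hir
        simp [not_le.mp hir] at h
      · rintro ⟨i, ⟨hi, hi'⟩, rfl⟩
        exact ⟨⟨i, hi', rfl⟩, by rw [hcard i hi', if_neg (by omega), add_zero]⟩
    rw [hS, (hinj.mono (fun _ h => h.2)).ncard_image, ← Finset.coe_Ico,
      Set.ncard_coe_finset, Nat.card_Ico]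
end
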